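/- Fix a chain of subsets [n] = K_1 ⊋ K_2 ⊋ ⋯ ⊋ K_{m+1} = ∅. For each 1 ≤ s ≤ m let S_s = K_s \ K_{s+1} and let T_{S_s} ⊆ ℙ^{S_s} denote the set of points of ℙ^{S_s} all of whose homogeneous coordinates are nonzero. Then the map sending a point p ∈ O_{K_1,…,K_{m+1}} (with I-components [a_i^I]_{i∈I}) to the tuple ([a_i^{K_s}]_{i∈S_s})_{1≤s≤m} is a well-defined homeomorphism from O_{K_1,…,K_{m+1}} onto the product T_{S_1} × T_{S_2} × ⋯ × T_{S_m}; in particular O_{K_1,…,K_{m+1}} is homeomorphic to a complex torus of dimension n − m. -/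

import Mathlib

noncomputable section

open Projectivization

instance projTopology {K V : Type*} [DivisionRing K] [AddCommGroup V] [Module K V]
    [TopologicalSpace V] : TopologicalSpace (Projectivization K V) :=
  inferInstanceAs (TopologicalSpace (Quotient (projectivizationSetoid K V)))

/-- The index type of nonempty subsets of `ι`. -/
abbrev NES (ι : Type) := {I : Set ι // I.Nonempty}

/-- The ambient product `P = ∏_{∅ ≠ I ⊆ ι} ℙ^I` of projective spaces. -/
abbrev PSp (ι : Type) := (I : NES ι) → Projectivization ℂ (↥I.1 → ℂ)

/-- The subset of `ℙ^ι` consisting of points all of whose homogeneous coordinates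
are nonzero (an algebraic torus). -/
def torusSet (ι : Type) : Set (Projectivization ℂ (ι → ℂ)) := {x | ∀ i, x.rep i ≠ 0}

open Classical in
/-- The `i`-th homogeneous coordinate (for the chosen representative `rep`) of the
`K`-component of a point `p ∈ P`; junk value `0` if `i ∉ K` or `K = ∅`. -/
def pcoord (ι : Type) (p : PSp ι) (K : Set ι) (i : ι) : ℂ :=
  if h : K.Nonempty ∧ i ∈ K then (p ⟨K, h.1⟩).rep ⟨i, h.2⟩ else 0

lemma pcoord_exists_ne (ι : Type) (p : PSp ι) (K : Set ι) (hK : K.Nonempty) :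
    ∃ i, i ∈ K ∧ pcoord ι p K i ≠ 0 := by
  obtain ⟨x, hx⟩ := Function.ne_iff.mp (Projectivization.rep_nonzero (p ⟨K, hK⟩))
  refine ⟨x.1, x.2, ?_⟩
  rw [pcoord, dif_pos ⟨hK, x.2⟩]
  simpa using hx

/-- The map `ρ` from the torus to `P`, whose `I`-component is given by restricting
the homogeneous coordinates. -/
def rho (ι : Type) (x : ↥(torusSet ι)) : PSp ι := fun I =>
  Projectivization.mk ℂ (fun i : ↥I.1 => x.1.rep i.1) <| by
    obtain ⟨i, hi⟩ := I.2
    intro h0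
    exact x.2 i (by simpa using congrFun h0 ⟨i, hi⟩)

/-- `Y`, the closure of `ρ(T)` in `P`. -/
def Yn (ι : Type) : Set (PSp ι) := closure (Set.range (rho ι))

/-- The chain of a point `p ∈ P`: `chainK ι p 0 = univ` (this is `K₁` in the paper)
and `chainK ι p (ℓ+1)` (i.e. `K_{ℓ+2}`) consists of those `k ∈ chainK ι p ℓ` for which the
`k`-th homogeneous coordinate of the `chainK ι p ℓ`-component of `p` vanishes. -/
def chainK (ι : Type) (p : PSp ι) : ℕ → Set ι
  | 0 => Set.univ
  | ℓ + 1 => {k ∈ chainK ι p ℓ | pcoord ι p (chainK ι p ℓ) k = 0}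

/-- A chain of subsets `ι = K 0 ⊋ K 1 ⊋ ⋯ ⊋ K m = ∅` (written `K₁ ⊋ ⋯ ⊋ K_{m+1}` in
the paper); we extend it by `∅` beyond the `m`-th step so that it is determined by
the function `K`. -/
structure SubsetChain (ι : Type) where
  m : ℕ
  K : ℕ → Set ι
  first : K 0 = Set.univ
  strict : ∀ ℓ < m, K (ℓ + 1) ⊂ K ℓ
  last : K m = ∅
  beyond : ∀ ℓ, m ≤ ℓ → K ℓ = ∅

/-- The piece `O_{K₁,…,K_{m+1}}` of `Y`: those points of `Y` whose chain is the given one. -/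
def Ochain (ι : Type) (c : SubsetChain ι) : Set (PSp ι) :=
  {p ∈ Yn ι | ∀ ℓ ≤ c.m, chainK ι p ℓ = c.K ℓ}

/-- The subset `D_{K₁,…,K_{m+1}}` of `Y`: the points whose `K_ℓ`-component has vanishing
coordinates indexed by `K_{ℓ+1}`. -/
def Dchain (ι : Type) (c : SubsetChain ι) : Set (PSp ι) :=
  {p ∈ Yn ι | ∀ ℓ < c.m, ∀ k ∈ c.K (ℓ + 1), pcoord ι p (c.K ℓ) k = 0}

/-- The action of an element of the torus on a point of `P`:
`[a]·([b_i]_{i ∈ I})_I = ([a_i b_i]_{i ∈ I})_I`. -/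
def act (ι : Type) (t : ↥(torusSet ι)) (p : PSp ι) : PSp ι := fun I =>
  Projectivization.mk ℂ (fun i : ↥I.1 => t.1.rep i.1 * (p I).rep i) <| by
    intro h0
    obtain ⟨i, hi⟩ := Function.ne_iff.mp (Projectivization.rep_nonzero (p I))
    have h : t.1.rep i.1 * (p I).rep i = 0 := by simpa using congrFun h0 i
    exact mul_ne_zero (t.2 i.1) (by simpa using hi) h

/-- The action of a permutation `w` of `ι` on `P`: the `w(I)`-component of `w·p` is
`[a^I_{w⁻¹(j)}]_{j ∈ w(I)}`; equivalently the `J`-component of `w·p` is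
`[a^{w⁻¹(J)}_{w⁻¹(j)}]_{j ∈ J}`. -/
def permAct (ι : Type) (w : Equiv.Perm ι) (p : PSp ι) : PSp ι := fun J =>
  Projectivization.mk ℂ (fun j : ↥J.1 => pcoord ι p (⇑(w⁻¹) '' J.1) (w⁻¹ j.1)) <| by
    have hK : ((⇑(w⁻¹) : ι → ι) '' J.1).Nonempty := J.2.image _
    obtain ⟨i, hi, hne⟩ := pcoord_exists_ne ι p _ hK
    obtain ⟨j, hj, hji⟩ := hi
    intro h0
    apply hne
    have h := congrFun h0 ⟨j, hj⟩
    simpa [hji] using h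

section Aux

lemma aux_mk_rep {κ : Type} (v : κ → ℂ) (hv : v ≠ 0) :
    ∃ a : ℂ, a ≠ 0 ∧ ∀ i, (Projectivization.mk ℂ v hv).rep i = a * v i := by
  obtain ⟨a, ha⟩ := Projectivization.exists_smul_eq_mk_rep ℂ v hv
  refine ⟨a, a.ne_zero, fun i => ?_⟩
  rw [← ha]; rfl

lemma aux_mk_eq {κ : Type} (v w : κ → ℂ) (hv : v ≠ 0) (hw : w ≠ 0)
    (h : ∀ i j, v i * w j = v j * w i) :
    Projectivization.mk ℂ v hv = Projectivization.mk ℂ w hw := by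
  rw [Projectivization.mk_eq_mk_iff']
  obtain ⟨j, hj⟩ := Function.ne_iff.mp hw
  have hj' : w j ≠ 0 := by simpa using hj
  refine ⟨v j / w j, ?_⟩
  funext i
  have := h i j
  simp only [Pi.smul_apply, smul_eq_mul]
  field_simp
  linear_combination -this

abbrev auxNZ (κ : Type) := {v : κ → ℂ // v ≠ 0}

def auxmk (κ : Type) (v : auxNZ κ) : Projectivization ℂ (κ → ℂ) := Projectivization.mk ℂ v.1 v.2

lemma auxmk_quot (κ : Type) : IsOpenQuotientMap (auxmk κ) := by
  have hc : Continuous (auxmk κ) := continuous_quotient_mk'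
  have hs : Function.Surjective (auxmk κ) := fun x => ⟨⟨x.rep, x.rep_nonzero⟩, x.mk_rep⟩
  refine ⟨hs, hc, ?_⟩
  intro U hU
  have hq : Topology.IsQuotientMap (auxmk κ) := isQuotientMap_quotient_mk'
  rw [← hq.isOpen_preimage]
  let sm : ℂˣ → auxNZ κ → auxNZ κ := fun a v => ⟨(a : ℂ) • v.1, smul_ne_zero a.ne_zero v.2⟩
  have hsm : ∀ a, Continuous (sm a) := fun a => by
    apply Continuous.subtype_mk
    exact continuous_subtype_val.const_smul (a : ℂ)
  have : auxmk κ ⁻¹' (auxmk κ '' U) = ⋃ a : ℂˣ, sm a ⁻¹' U := by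
    ext v
    simp only [Set.mem_preimage, Set.mem_image, Set.mem_iUnion]
    constructor
    · rintro ⟨w, hw, hwv⟩
      obtain ⟨a, ha⟩ := (Projectivization.mk_eq_mk_iff ℂ _ _ w.2 v.2).1 hwv
      refine ⟨a, ?_⟩
      have : sm a v = w := Subtype.ext ha
      rwa [this]
    · rintro ⟨a, ha⟩
      exact ⟨_, ha, (Projectivization.mk_eq_mk_iff ℂ _ _ (sm a v).2 v.2).2 ⟨a, rfl⟩⟩
  rw [this]
  exact isOpen_iUnion fun a => hU.preimage (hsm a)

lemma aux_cont_mk {X : Type*} [TopologicalSpace X] {κ : Type} (f : X → κ → ℂ)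
    (hf : Continuous f) (h : ∀ x, f x ≠ 0) :
    Continuous fun x => Projectivization.mk ℂ (f x) (h x) :=
  (auxmk_quot κ).continuous.comp (hf.subtype_mk h)

lemma aux_coord {κ : Type} (i : κ) : Continuous fun w : auxNZ κ => w.1 i :=
  (continuous_apply i).comp continuous_subtype_val

lemma aux_ratio {κ : Type} (i j : κ) (x : Projectivization ℂ (κ → ℂ)) (hx : x.rep j ≠ 0) :
    ContinuousAt (fun x : Projectivization ℂ (κ → ℂ) => x.rep i / x.rep j) x := by
  obtain ⟨v, rfl⟩ : ∃ v, auxmk κ v = x := (auxmk_quot κ).surjective x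
  rw [← (auxmk_quot κ).continuousAt_comp_iff]
  have he : (fun x : Projectivization ℂ (κ → ℂ) => x.rep i / x.rep j) ∘ auxmk κ
      = fun w : auxNZ κ => w.1 i / w.1 j := by
    funext w
    obtain ⟨a, ha, haw⟩ := aux_mk_rep w.1 w.2
    simp only [Function.comp, auxmk, haw]
    exact mul_div_mul_left _ _ ha
  rw [he]
  obtain ⟨a, ha, haw⟩ := aux_mk_rep v.1 v.2
  have hv : v.1 j ≠ 0 := fun h => hx (by rw [auxmk, haw, h, mul_zero])
  exact ((aux_coord i).continuousAt).div ((aux_coord j).continuousAt) hv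

lemma aux_closed {κ μ : Type} (i j : κ) (i' j' : μ) :
    IsClosed {q : Projectivization ℂ (κ → ℂ) × Projectivization ℂ (μ → ℂ) |
      q.1.rep i * q.2.rep j' = q.1.rep j * q.2.rep i'} := by
  have hq := ((auxmk_quot κ).prodMap (auxmk_quot μ)).isQuotientMap
  rw [← hq.isClosed_preimage]
  have : (Prod.map (auxmk κ) (auxmk μ) ⁻¹' {q : Projectivization ℂ (κ → ℂ) × Projectivization ℂ (μ → ℂ) |
      q.1.rep i * q.2.rep j' = q.1.rep j * q.2.rep i'})
      = {q : auxNZ κ × auxNZ μ | q.1.1 i * q.2.1 j' = q.1.1 j * q.2.1 i'} := by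
    ext ⟨v, w⟩
    obtain ⟨a, ha, hav⟩ := aux_mk_rep v.1 v.2
    obtain ⟨b, hb, hbw⟩ := aux_mk_rep w.1 w.2
    simp only [Set.mem_preimage, Set.mem_ofPred_eq, Prod.map, auxmk, hav, hbw]
    constructor
    · intro h
      have hab := mul_ne_zero ha hb
      apply mul_left_cancel₀ hab
      linear_combination h
    · intro h
      linear_combination a * b * h
  rw [this]
  exact isClosed_eq (((aux_coord i).comp continuous_fst).mul ((aux_coord j').comp continuous_snd))
    (((aux_coord j).comp continuous_fst).mul ((aux_coord i').comp continuous_snd))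

end Aux

section Aux2

lemma aux_mem_torus {κ : Type} (v : κ → ℂ) (hv : v ≠ 0) (h : ∀ i, v i ≠ 0) :
    Projectivization.mk ℂ v hv ∈ torusSet κ := by
  obtain ⟨a, ha, haw⟩ := aux_mk_rep v hv
  intro i
  rw [haw]
  exact mul_ne_zero ha (h i)

/-- ratio coordinate on the torus -/
lemma aux_ratio_torus {κ : Type} (i j : κ) :
    Continuous fun x : torusSet κ => x.1.rep i / x.1.rep j :=
  continuous_iff_continuousAt.2 fun x =>
    (aux_ratio i j x.1 (x.2 j)).comp continuous_subtype_val.continuousAt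

open Classical in
/-- The torus with base point `b`. -/
def auxTorus {κ : Type} (b : κ) : torusSet κ ≃ₜ ({i : κ // i ≠ b} → ℂˣ) where
  toFun x i := Units.mk0 (x.1.rep i.1 / x.1.rep b) (div_ne_zero (x.2 _) (x.2 _))
  invFun u := ⟨Projectivization.mk ℂ (fun i => if h : i = b then 1 else (u ⟨i, h⟩ : ℂ))
      (fun h => by simpa using congrFun h b), aux_mem_torus _ _ (fun i => by
        split_ifs
        · exact one_ne_zero
        · exact Units.ne_zero _)⟩
  left_inv x := by
    apply Subtype.ext
    conv_rhs => rw [← x.1.mk_rep]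
    apply aux_mk_eq
    have hb := x.2 b
    have key : ∀ i, (if h : i = b then (1 : ℂ) else ((Units.mk0 (x.1.rep i / x.1.rep b)
        (div_ne_zero (x.2 _) (x.2 _)) : ℂˣ) : ℂ)) = x.1.rep i / x.1.rep b := by
      intro i
      split_ifs with h
      · rw [h, div_self hb]
      · rfl
    intro i j
    simp only [key]
    field_simp
  right_inv u := by
    funext i
    apply Units.ext
    obtain ⟨a, ha, haw⟩ := aux_mk_rep (fun i => if h : i = b then 1 else (u ⟨i, h⟩ : ℂ))
      (fun h => by simpa using congrFun h b)
    simp only [Units.val_mk0, haw]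
    rw [mul_div_mul_left _ _ ha]
    simp [i.2]
  continuous_toFun := by
    refine continuous_pi fun i => ?_
    rw [Units.isEmbedding_val₀.continuous_iff]
    exact aux_ratio_torus i.1 b
  continuous_invFun := by
    apply Continuous.subtype_mk
    apply aux_cont_mk
    refine continuous_pi fun i => ?_
    split_ifs with h
    · exact continuous_const
    · exact Units.continuous_val.comp (continuous_apply _)

end Aux2

section Chain

variable {n : ℕ} (c : SubsetChain (Fin n))

lemma aux_anti : Antitone c.K := by
  refine antitone_nat_of_succ_le fun ℓ => ?_
  rcases lt_or_ge ℓ c.m with h | h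
  · exact (c.strict ℓ h).subset
  · rw [c.beyond (ℓ + 1) (by omega)]
    exact Set.empty_subset _

open Classical in
lemma aux_lev_ex (i : Fin n) : ∃ ℓ, i ∉ c.K (ℓ + 1) :=
  ⟨c.m, by rw [c.beyond _ (by omega)]; exact Set.notMem_empty i⟩

open Classical in
/-- level of an index -/
def auxLev (i : Fin n) : ℕ := Nat.find (aux_lev_ex c i)

lemma aux_mem_iff (i : Fin n) (s : ℕ) : i ∈ c.K s ↔ s ≤ auxLev c i := by
  classical
  constructor
  · intro h
    by_contra! hlt
    exact Nat.find_spec (aux_lev_ex c i) (aux_anti c (Nat.succ_le_of_lt hlt) h)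
  · intro h
    rcases s with _ | s
    · rw [c.first]; trivial
    · by_contra hn
      have : auxLev c i ≤ s := Nat.find_min' _ hn
      omega

lemma aux_lev_lt (i : Fin n) : auxLev c i < c.m := by
  by_contra! h
  have := (aux_mem_iff c i c.m).2 h
  rw [c.last] at this
  exact this

lemma aux_diff_iff (i : Fin n) (s : ℕ) : i ∈ c.K s \ c.K (s + 1) ↔ auxLev c i = s := by
  rw [Set.mem_sdiff, aux_mem_iff, aux_mem_iff]; omega

lemma aux_base_ex (s : Fin c.m) : ∃ i, i ∈ c.K s.1 \ c.K (s.1 + 1) :=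
  Set.nonempty_of_ssubset (c.strict s.1 s.2)

def auxBase (s : Fin c.m) : ↥(c.K s.1 \ c.K (s.1 + 1)) := ⟨_, (aux_base_ex c s).choose_spec⟩

/-- level of a set -/
def auxL (I : Set (Fin n)) : ℕ := sInf (auxLev c '' I)

lemma auxL_le (I : Set (Fin n)) (i : Fin n) (hi : i ∈ I) : auxL c I ≤ auxLev c i :=
  Nat.sInf_le ⟨i, hi, rfl⟩

lemma auxL_ex (I : Set (Fin n)) (hI : I.Nonempty) : ∃ i ∈ I, auxLev c i = auxL c I :=
  Nat.sInf_mem (hI.image _)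

lemma auxL_K (s : Fin c.m) : auxL c (c.K s.1) = s.1 := by
  have hb := (auxBase c s).2
  apply le_antisymm
  · have := auxL_le c _ _ hb.1
    rwa [(aux_diff_iff c _ _).1 hb] at this
  · obtain ⟨i, hi, h⟩ := auxL_ex c (c.K s.1) ⟨_, hb.1⟩
    rw [← h]
    exact (aux_mem_iff c _ _).1 hi

lemma aux_Kne (s : Fin c.m) : (c.K s.1).Nonempty := ⟨_, (auxBase c s).2.1⟩

lemma aux_pcoord (p : PSp (Fin n)) (K : Set (Fin n)) (hK : K.Nonempty) (i : Fin n) (hi : i ∈ K) :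
    pcoord (Fin n) p K i = (p ⟨K, hK⟩).rep ⟨i, hi⟩ := by
  rw [pcoord, dif_pos ⟨hK, hi⟩]

/-- degenerate curve -/
lemma aux_curve_ne (τ : Fin n → ℂ) (hτ : ∀ i, τ i ≠ 0) (ε : ℂ) (I : NES (Fin n)) :
    (fun i : ↥I.1 => ε ^ (auxLev c i.1 - auxL c I.1) * τ i.1) ≠ 0 := by
  obtain ⟨i, hi, h⟩ := auxL_ex c I.1 I.2
  intro h0
  have := congrFun h0 ⟨i, hi⟩
  simp [h] at this
  exact hτ i this

def auxCurve (τ : Fin n → ℂ) (hτ : ∀ i, τ i ≠ 0) (ε : ℂ) : PSp (Fin n) := fun I =>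
  Projectivization.mk ℂ (fun i : ↥I.1 => ε ^ (auxLev c i.1 - auxL c I.1) * τ i.1)
    (aux_curve_ne c τ hτ ε I)

lemma auxCurve_cont (τ : Fin n → ℂ) (hτ : ∀ i, τ i ≠ 0) : Continuous (auxCurve c τ hτ) := by
  refine continuous_pi fun I => ?_
  apply aux_cont_mk
  fun_prop

lemma auxCurve_range (hn : 1 ≤ n) (τ : Fin n → ℂ) (hτ : ∀ i, τ i ≠ 0) (ε : ℂ) (hε : ε ≠ 0) :
    auxCurve c τ hτ ε ∈ Set.range (rho (Fin n)) := by
  let x : Fin n → ℂ := fun i => ε ^ auxLev c i * τ i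
  have hx : ∀ i, x i ≠ 0 := fun i => mul_ne_zero (pow_ne_zero _ hε) (hτ i)
  have hx0 : x ≠ 0 := fun h => hx ⟨0, hn⟩ (congrFun h _)
  refine ⟨⟨Projectivization.mk ℂ x hx0, aux_mem_torus _ _ hx⟩, ?_⟩
  funext I
  apply aux_mk_eq
  obtain ⟨a, ha, haw⟩ := aux_mk_rep x hx0
  intro i j
  simp only [haw, x]
  have hp : ∀ i : ↥I.1, ε ^ auxLev c i.1 = ε ^ (auxL c I.1) * ε ^ (auxLev c i.1 - auxL c I.1) := by
    intro i
    rw [← pow_add, Nat.add_sub_cancel' (auxL_le c I.1 i.1 i.2)]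
  rw [hp i, hp j]
  ring

lemma auxCurve_Y (hn : 1 ≤ n) (τ : Fin n → ℂ) (hτ : ∀ i, τ i ≠ 0) :
    auxCurve c τ hτ 0 ∈ Yn (Fin n) := by
  apply mem_closure_of_tendsto (b := nhdsWithin (0 : ℂ) {0}ᶜ) (f := auxCurve c τ hτ)
  · exact ((auxCurve_cont c τ hτ).tendsto 0).mono_left nhdsWithin_le_nhds
  · filter_upwards [self_mem_nhdsWithin] with ε hε
    exact auxCurve_range c hn τ hτ ε hε

lemma auxCurve_pcoord (τ : Fin n → ℂ) (hτ : ∀ i, τ i ≠ 0) (s : Fin c.m) :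
    ∃ d : ℂ, d ≠ 0 ∧ ∀ i ∈ c.K s.1, pcoord (Fin n) (auxCurve c τ hτ 0) (c.K s.1) i =
      d * (if auxLev c i = s.1 then τ i else 0) := by
  obtain ⟨a, ha, haw⟩ := aux_mk_rep _ (aux_curve_ne c τ hτ 0 ⟨c.K s.1, aux_Kne c s⟩)
  refine ⟨a, ha, fun i hi => ?_⟩
  rw [aux_pcoord _ _ (aux_Kne c s) i hi, auxCurve, haw]
  simp only [auxL_K]
  have := (aux_mem_iff c i s.1).1 hi
  split_ifs with h
  · simp [h]
  · rw [zero_pow (by omega), zero_mul]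

lemma aux_chain_iff (p : PSp (Fin n)) : (∀ ℓ ≤ c.m, chainK (Fin n) p ℓ = c.K ℓ) ↔
    ∀ s : Fin c.m, ∀ i ∈ c.K s.1, (pcoord (Fin n) p (c.K s.1) i = 0 ↔ s.1 < auxLev c i) := by
  constructor
  · intro h s i hi
    have h1 := h (s.1 + 1) s.2
    rw [chainK, h s.1 s.2.le] at h1
    have h2 : i ∈ c.K (s.1 + 1) ↔ s.1 < auxLev c i := aux_mem_iff c i _
    rw [← h2, ← h1]
    exact ⟨fun h => ⟨hi, h⟩, fun h => h.2⟩
  · intro h ℓ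
    induction ℓ with
    | zero => intro _; rw [c.first]; rfl
    | succ ℓ ih =>
      intro hl
      rw [chainK, ih (by omega)]
      ext i
      have h2 : i ∈ c.K (ℓ + 1) ↔ ℓ < auxLev c i := aux_mem_iff c i _
      rw [h2]
      constructor
      · rintro ⟨h3, h4⟩
        exact (h ⟨ℓ, hl⟩ i h3).1 h4
      · intro h3
        have h4 := (aux_mem_iff c i ℓ).2 h3.le
        exact ⟨h4, (h ⟨ℓ, hl⟩ i h4).2 h3⟩

lemma auxCurve_O (hn : 1 ≤ n) (τ : Fin n → ℂ) (hτ : ∀ i, τ i ≠ 0) :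
    auxCurve c τ hτ 0 ∈ Ochain (Fin n) c := by
  refine ⟨auxCurve_Y c hn τ hτ, (aux_chain_iff c _).2 fun s i hi => ?_⟩
  obtain ⟨d, hd, h⟩ := auxCurve_pcoord c τ hτ s
  rw [h i hi]
  have := (aux_mem_iff c i s.1).1 hi
  split_ifs with h1
  · simp [hd, hτ i, h1]
  · simp; omega

lemma aux_Y_rel (p : PSp (Fin n)) (hp : p ∈ Yn (Fin n)) (I J : NES (Fin n)) (hIJ : I.1 ⊆ J.1)
    (i j : ↥I.1) : (p I).rep i * (p J).rep ⟨j.1, hIJ j.2⟩ = (p I).rep j * (p J).rep ⟨i.1, hIJ i.2⟩ := by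
  have hcl := (aux_closed i j (⟨i.1, hIJ i.2⟩ : ↥J.1) ⟨j.1, hIJ j.2⟩).preimage
    ((continuous_apply I).prodMk (continuous_apply J) :
      Continuous fun p : PSp (Fin n) => (p I, p J))
  refine closure_minimal ?_ hcl hp
  rintro _ ⟨x, rfl⟩
  obtain ⟨a, ha, haw⟩ := aux_mk_rep (fun i : ↥I.1 => x.1.rep i.1) (fun h => x.2 i.1 (congrFun h i))
  obtain ⟨b, hb, hbw⟩ := aux_mk_rep (fun i : ↥J.1 => x.1.rep i.1)
    (fun h => x.2 i.1 (congrFun h ⟨i.1, hIJ i.2⟩))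
  simp only [Set.mem_preimage, Set.mem_ofPred_eq, rho, haw, hbw]
  ring

lemma aux_O_ne (p : Ochain (Fin n) c) (s : Fin c.m) (i : ↥(c.K s.1 \ c.K (s.1 + 1))) :
    pcoord (Fin n) p.1 (c.K s.1) i.1 ≠ 0 := by
  intro h
  have := ((aux_chain_iff c p.1).1 p.2.2 s i.1 i.2.1).1 h
  have := (aux_diff_iff c i.1 s.1).1 i.2
  omega

/-- forward map -/
def auxF (p : Ochain (Fin n) c) (s : Fin c.m) : torusSet ↥(c.K s.1 \ c.K (s.1 + 1)) :=
  ⟨Projectivization.mk ℂ (fun i => pcoord (Fin n) p.1 (c.K s.1) i.1)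
    (fun h => aux_O_ne c p s (auxBase c s) (congrFun h (auxBase c s))),
    aux_mem_torus _ _ (aux_O_ne c p s)⟩

abbrev auxT := (s : Fin c.m) → torusSet ↥(c.K s.1 \ c.K (s.1 + 1))

def auxTau (t : auxT c) (i : Fin n) : ℂ :=
  (t ⟨auxLev c i, aux_lev_lt c i⟩).1.rep ⟨i, (aux_diff_iff c i _).2 rfl⟩ /
    (t ⟨auxLev c i, aux_lev_lt c i⟩).1.rep (auxBase c _)

lemma auxTau_eq (t : auxT c) (s : Fin c.m) (i : ↥(c.K s.1 \ c.K (s.1 + 1))) :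
    auxTau c t i.1 = (t s).1.rep i / (t s).1.rep (auxBase c s) := by
  obtain ⟨s, hs⟩ := s
  obtain ⟨i, hi⟩ := i
  have := (aux_diff_iff c i s).1 hi
  subst this
  rfl

lemma auxTau_ne (t : auxT c) (i : Fin n) : auxTau c t i ≠ 0 := div_ne_zero ((t _).2 _) ((t _).2 _)

lemma auxTau_cont (i : Fin n) : Continuous fun t : auxT c => auxTau c t i :=
  (aux_ratio_torus _ _).comp (continuous_apply _)

lemma auxF_cont : Continuous (auxF c) := by
  refine continuous_pi fun s => ?_
  apply Continuous.subtype_mk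
  let b := auxBase c s
  have hne : ∀ p : Ochain (Fin n) c, (fun i : ↥(c.K s.1 \ c.K (s.1 + 1)) =>
      pcoord (Fin n) p.1 (c.K s.1) i.1 / pcoord (Fin n) p.1 (c.K s.1) b.1) ≠ 0 := fun p h =>
    div_ne_zero (aux_O_ne c p s b) (aux_O_ne c p s b) (congrFun h b)
  have := aux_cont_mk (fun (p : Ochain (Fin n) c) (i : ↥(c.K s.1 \ c.K (s.1 + 1))) =>
      pcoord (Fin n) p.1 (c.K s.1) i.1 / pcoord (Fin n) p.1 (c.K s.1) b.1) (by
    refine continuous_pi fun i => ?_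
    have hi := i.2.1
    have hb := b.2.1
    refine continuous_iff_continuousAt.2 fun p => ?_
    have hp := aux_O_ne c p s b
    simp only [aux_pcoord _ _ (aux_Kne c s) _ hi, aux_pcoord _ _ (aux_Kne c s) _ hb] at hp ⊢
    exact (aux_ratio (⟨i.1, hi⟩ : ↥(c.K s.1)) ⟨b.1, hb⟩ (p.1 ⟨c.K s.1, aux_Kne c s⟩) hp).comp
      (f := fun p : Ochain (Fin n) c => p.1 ⟨c.K s.1, aux_Kne c s⟩)
      ((continuous_apply _).comp continuous_subtype_val).continuousAt) hne
  convert this using 2 with p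
  apply aux_mk_eq
  intro i j
  ring

/-- The homeomorphism. -/
def auxE (hn : 1 ≤ n) : Ochain (Fin n) c ≃ₜ auxT c where
  toFun := auxF c
  invFun t := ⟨auxCurve c (auxTau c t) (auxTau_ne c t) 0, auxCurve_O c hn _ _⟩
  left_inv p := by
    apply Subtype.ext
    funext I
    conv_rhs => rw [← (p.1 I).mk_rep]
    apply aux_mk_eq
    obtain ⟨i0, hi0, hl⟩ := auxL_ex c I.1 I.2
    have hlt : auxL c I.1 < c.m := hl ▸ aux_lev_lt c i0
    let s : Fin c.m := ⟨auxL c I.1, hlt⟩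
    have hsub : I.1 ⊆ c.K s.1 := fun i hi => (aux_mem_iff c i _).2 (auxL_le c _ i hi)
    have key : ∀ i : ↥I.1, (0 : ℂ) ^ (auxLev c i.1 - auxL c I.1) * auxTau c (auxF c p) i.1 =
        pcoord (Fin n) p.1 (c.K s.1) i.1 / pcoord (Fin n) p.1 (c.K s.1) (auxBase c s).1 := by
      intro i
      have hle := auxL_le c I.1 i.1 i.2
      by_cases h : auxLev c i.1 = auxL c I.1
      · rw [auxTau_eq c (auxF c p) s ⟨i.1, (aux_diff_iff c _ _).2 h⟩,
          show auxLev c i.1 - auxL c I.1 = 0 by omega]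
        obtain ⟨a, ha, haw⟩ := aux_mk_rep (fun i : ↥(c.K s.1 \ c.K (s.1 + 1)) =>
          pcoord (Fin n) p.1 (c.K s.1) i.1)
          (fun h => aux_O_ne c p s (auxBase c s) (congrFun h (auxBase c s)))
        simp only [auxF, haw]
        rw [mul_div_mul_left _ _ ha]
        simp
      · rw [zero_pow (by omega), zero_mul,
          ((aux_chain_iff c p.1).1 p.2.2 s i.1 (hsub i.2)).2 (by simp only [s]; omega), zero_div]
    intro i j
    rw [key i, key j]
    have := aux_Y_rel p.1 p.2.1 I ⟨c.K s.1, aux_Kne c s⟩ hsub i j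
    rw [aux_pcoord p.1 _ (aux_Kne c s) _ (hsub i.2), aux_pcoord p.1 _ (aux_Kne c s) _ (hsub j.2)]
    linear_combination (-1 / pcoord (Fin n) p.1 (c.K s.1) (auxBase c s).1) * this
  right_inv t := by
    funext s
    apply Subtype.ext
    conv_rhs => rw [← (t s).1.mk_rep]
    apply aux_mk_eq
    obtain ⟨d, hd, h⟩ := auxCurve_pcoord c (auxTau c t) (auxTau_ne c t) s
    intro i j
    simp only []
    rw [h _ i.2.1, h _ j.2.1, if_pos ((aux_diff_iff c _ _).1 i.2),
      if_pos ((aux_diff_iff c _ _).1 j.2), auxTau_eq, auxTau_eq]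
    ring
  continuous_toFun := auxF_cont c
  continuous_invFun := by
    apply Continuous.subtype_mk
    refine continuous_pi fun I => ?_
    apply aux_cont_mk
    exact continuous_pi fun i => continuous_const.mul (auxTau_cont c i.1)

def auxCurryH {κ : Type} (F : κ → Type) :
    ((s : κ) → F s → ℂˣ) ≃ₜ ((Σ s, F s) → ℂˣ) where
  toFun f x := f x.1 x.2
  invFun g s i := g ⟨s, i⟩
  left_inv _ := rfl
  right_inv _ := rfl
  continuous_toFun := by fun_prop
  continuous_invFun := by fun_prop

open Classical in
lemma aux_card : Fintype.card (Σ s : Fin c.m, {i : ↥(c.K s.1 \ c.K (s.1 + 1)) // i ≠ auxBase c s})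
    = n - c.m := by
  have e : (Σ s : Fin c.m, ↥(c.K s.1 \ c.K (s.1 + 1))) ≃ Fin n :=
    { toFun := fun x => x.2.1
      invFun := fun i => ⟨⟨auxLev c i, aux_lev_lt c i⟩, ⟨i, (aux_diff_iff c i _).2 rfl⟩⟩
      left_inv := by
        rintro ⟨⟨s, hs⟩, ⟨i, hi⟩⟩
        have := (aux_diff_iff c i s).1 hi
        subst this
        rfl
      right_inv := fun i => rfl }
  have h1 := Fintype.card_congr e
  rw [Fintype.card_fin, Fintype.card_sigma] at h1
  rw [Fintype.card_sigma]
  have h2 : ∀ s : Fin c.m, Fintype.card ↥(c.K s.1 \ c.K (s.1 + 1)) =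
      Fintype.card {i : ↥(c.K s.1 \ c.K (s.1 + 1)) // i ≠ auxBase c s} + 1 := by
    intro s
    have hpos : 0 < Fintype.card ↥(c.K s.1 \ c.K (s.1 + 1)) :=
      Fintype.card_pos_iff.2 ⟨auxBase c s⟩
    rw [Fintype.card_subtype_compl, Fintype.card_subtype_eq]
    omega
  simp only [h2, Finset.sum_add_distrib] at h1
  simp at h1
  simp
  omega

end Chain

/-- The orbit structure of the pieces: for a chain `[n] = K₁ ⊋ ⋯ ⊋ K_{m+1} = ∅`, with
`S_s = K_s \ K_{s+1}`, the map sending `p ∈ O_{K₁,…,K_{m+1}}` to the tuple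
`([a^{K_s}_i]_{i ∈ S_s})_{1 ≤ s ≤ m}` is a well-defined homeomorphism onto
`T_{S_1} × ⋯ × T_{S_m}`; in particular `O_{K₁,…,K_{m+1}}` is homeomorphic to a complex
torus `(ℂ^×)^{n-m}` of dimension `n - m`. -/
theorem stmt4 (n : ℕ) (hn : 1 ≤ n) (c : SubsetChain (Fin n)) :
    (∃ e : ↥(Ochain (Fin n) c) ≃ₜ
        ((s : Fin c.m) → ↥(torusSet ↥(c.K s.1 \ c.K (s.1 + 1)))),
      ∀ (p : ↥(Ochain (Fin n) c)) (s : Fin c.m), ∃ d : ℂ, d ≠ 0 ∧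
        ∀ i : ↥(c.K s.1 \ c.K (s.1 + 1)),
          (e p s).1.rep i = d * pcoord (Fin n) p.1 (c.K s.1) i.1) ∧
    Nonempty (↥(Ochain (Fin n) c) ≃ₜ (Fin (n - c.m) → ℂˣ)) := by
  refine ⟨⟨auxE c hn, fun p s => ?_⟩, ?_⟩
  · exact aux_mk_rep (fun i : ↥(c.K s.1 \ c.K (s.1 + 1)) => pcoord (Fin n) p.1 (c.K s.1) i.1)
      (fun h => aux_O_ne c p s (auxBase c s) (congrFun h (auxBase c s)))
  · classical
    exact ⟨((auxE c hn).trans (Homeomorph.piCongrRight fun s => auxTorus (auxBase c s))).trans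
      ((auxCurryH _).trans (Homeomorph.piCongrLeft (Y := fun _ => ℂˣ)
        (Fintype.equivFinOfCardEq (aux_card c))))⟩
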